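/- (L²-norm of the K'-fixed vectors ψ_j on S^{p−1} × S^{q−1}) Let p ≥ q ≥ 2 be integers with p + q even and p + q ≥ 6, and set μ = p − 3, ν = q − 3. For j ∈ ℕ, ∫_{S^{p−1}×S^{q−1}} |C̃_j^{(p−2)/2}(v_0) · C̃_{j+(p−q)/2}^{(q−2)/2}(w_{q−1})|² dσ(v) dσ(w) = (π² Γ(j+μ+1) Γ(j+(μ+ν+2)/2))/(j! 2^{μ+ν} (j+(μ+1)/2)² Γ(j+(μ−ν+2)/2)) · vol(S^{p−2}) vol(S^{q−2}), where v_0 denotes the first coordinate of v ∈ S^{p−1} ⊂ ℝ^p, w_{q−1} denotes the last coordinate of w ∈ S^{q−1} ⊂ ℝ^q, dσ denotes the surface (Euclidean) measure on each sphere, and vol(S^{n−1}) is the surface volume of the unit sphere in ℝ^n. -/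

import Mathlib

open MeasureTheory Real Filter Set Metric

noncomputable section

/-- Normalized Bessel function of the first kind: `J̃_α(x) = (x/2)^{-α} J_α(x)`,
given by its (entire) power series. -/
def besselJt (α x : ℝ) : ℝ :=
  ∑' m : ℕ, (-1) ^ m / (m.factorial * Real.Gamma (m + α + 1)) * (x / 2) ^ (2 * m)

/-- Bessel function of the first kind `J_α`. -/
def besselJ (α x : ℝ) : ℝ :=
  ∑' m : ℕ, (-1) ^ m / (m.factorial * Real.Gamma (m + α + 1)) * (x / 2) ^ (2 * (m : ℝ) + α)

/-- Normalized modified Bessel function `Ĩ_α(x) = (x/2)^{-α} I_α(x)`,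
given by its (entire, even) power series. -/
def besselIt (α x : ℝ) : ℝ :=
  ∑' m : ℕ, (x / 2) ^ (2 * m) / (m.factorial * Real.Gamma (m + α + 1))

/-- Modified Bessel function of the first kind `I_α`. -/
def besselI (α x : ℝ) : ℝ :=
  ∑' m : ℕ, (x / 2) ^ (2 * (m : ℝ) + α) / (m.factorial * Real.Gamma (m + α + 1))

/-- Modified Bessel function of the second kind,
`K_α(x) = lim_{β→α} (π/2)(I_{−β}(x) − I_β(x))/sin(βπ)`. -/
def besselK (α x : ℝ) : ℝ :=
  limUnder (nhdsWithin α {α}ᶜ) fun β =>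
    Real.pi / 2 * (besselI (-β) x - besselI β x) / Real.sin (β * Real.pi)

/-- Normalized K-Bessel function `K̃_α(x) = (x/2)^{-α} K_α(x)`. -/
def besselKt (α x : ℝ) : ℝ := (x / 2) ^ (-α) * besselK α x

/-- Normalized Gegenbauer polynomial `C̃_n^λ = Γ(λ) C_n^λ`, where `C_n^λ` is defined via the
generating function `(1 − 2xt + t²)^{−λ} = Σ_{n≥0} C_n^λ(x) tⁿ`; explicitly,
`C̃_n^λ(x) = Σ_{k=0}^{⌊n/2⌋} (−1)^k Γ(λ+n−k)/(k!(n−2k)!) (2x)^{n−2k}`.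
This expression also gives the limit value `C̃_n^0 = lim_{λ→0+} Γ(λ) C_n^λ` for `n ≥ 1`. -/
def gegenbauerCt (n : ℕ) (l x : ℝ) : ℝ :=
  ∑ k ∈ Finset.range (n / 2 + 1),
    (-1) ^ k * Real.Gamma (l + n - k) / (k.factorial * (n - 2 * k).factorial)
      * (2 * x) ^ (n - 2 * k)

/-- Laguerre polynomial `L_n^μ(x) = Σ_{k=0}^n (−1)^k binom(n+μ, n−k) x^k/k!`
(with nonnegative integer parameter `μ`). -/
def laguerreL (n μ : ℕ) (x : ℝ) : ℝ :=
  ∑ k ∈ Finset.range (n + 1),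
    (-1) ^ k * (Nat.choose (n + μ) (n - k)) * x ^ k / k.factorial

/-- The Euler operator `θ = x d/dx`. -/
def eulerOp (u : ℝ → ℝ) : ℝ → ℝ := fun x => x * deriv u x

/-- `(θ+c)(θ+c+ν)u − x² u`, i.e. the operator `Q_ν(θ+c)` applied to `u`. -/
def besselQ (ν c : ℝ) (u : ℝ → ℝ) : ℝ → ℝ := fun x =>
  eulerOp (fun y => eulerOp u y + (c + ν) * u y) x
    + c * (eulerOp u x + (c + ν) * u x) - x ^ 2 * u x

/-- The fourth order differential operator
`D_{μ,ν} = x^{−2}((θ+μ)(θ+μ+ν) − x²)(θ(θ+ν) − x²)`. -/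
def Dop (μ ν : ℝ) (u : ℝ → ℝ) : ℝ → ℝ := fun x =>
  besselQ ν μ (besselQ ν 0 u) x / x ^ 2

/-- The generating function
`G^{μ,ν}(t,x) = (1−t)^{−(μ+ν+2)/2} Ĩ_{μ/2}(tx/(1−t)) K̃_{ν/2}(x/(1−t))`. -/
def genFun (μ ν t x : ℝ) : ℝ :=
  (1 - t) ^ (-(μ + ν + 2) / 2) * besselIt (μ / 2) (t * x / (1 - t))
    * besselKt (ν / 2) (x / (1 - t))

/-- The eigenfunctions `Λ_j^{μ,ν}`, defined as the Taylor coefficients in `t` at `t = 0` of the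
generating function `G^{μ,ν}(t,x) = Σ_{j≥0} Λ_j^{μ,ν}(x) t^j`. -/
def LambdaF (μ ν : ℝ) (j : ℕ) (x : ℝ) : ℝ :=
  iteratedDeriv j (fun t => genFun μ ν t x) 0 / j.factorial

/-- The integrality condition: `μ ≥ ν ≥ −1` are integers of the same parity,
not both equal to `−1`. -/
def IntCond (μ ν : ℤ) : Prop :=
  -1 ≤ ν ∧ ν ≤ μ ∧ Even (μ - ν) ∧ ¬(μ = -1 ∧ ν = -1)

end

/-!
The integral factors into two zonal integrals `∫ C̃_m^λ(v_i)² dσ(v)` over spheres `S^{n+1}` with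
`λ = n/2`. Integrating `e^{-‖x‖²} g(x_i/‖x‖)` over `ℝ^{n+2}` in polar coordinates, once for all of
`x` and once for `x_i` and the norm of the remaining coordinates, slices such an integral into
`vol(S^n) ∫₀^π C̃_m^λ(cos θ)² sin^{2λ} θ dθ`. As `C̃_m^λ` is an eigenvector of a second order
operator in divergence form, integrating by parts expresses its norm through that of its derivative
`2 C̃_{m-1}^{λ+1}` for the weight `sin^{2λ+2}`; descending to degree `0` leaves an integral
`∫₀^π sin^{2λ+2m} θ dθ`, which the same half-plane computation evaluates.
-/

section PolarCoordinates

variable {E : Type*} [NormedAddCommGroup E] [NormedSpace ℝ E] [Nontrivial E]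
  [FiniteDimensional ℝ E] [MeasurableSpace E] [BorelSpace E] (μ : Measure E) [μ.IsAddHaarMeasure]

lemma integral_mul_fun_norm_addHaar (h : E → ℝ) (k : ℝ → ℝ) :
    ∫ x, h (‖x‖⁻¹ • x) * k ‖x‖ ∂μ = (∫ v : sphere (0 : E) 1, h v ∂μ.toSphere) *
      ∫ r in Ioi (0 : ℝ), r ^ (Module.finrank ℝ E - 1) * k r := by
  calc
    _ = ∫ x : ({(0)}ᶜ : Set E), h (‖x.1‖⁻¹ • x.1) * k ‖x.1‖ ∂μ.comap (↑) := by
      rw [integral_subtype_comap (measurableSet_singleton _).compl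
        fun x ↦ h (‖x‖⁻¹ • x) * k ‖x‖, restrict_compl_singleton]
    _ = ∫ z, h z.1 * k z.2 ∂μ.toSphere.prod (.volumeIoiPow (Module.finrank ℝ E - 1)) := by
      simpa using μ.measurePreserving_homeomorphUnitSphereProd.integral_comp
        (Homeomorph.measurableEmbedding _) fun z ↦ h z.1 * k z.2
    _ = (∫ v : sphere (0 : E) 1, h v ∂μ.toSphere) *
        ∫ r : Ioi (0 : ℝ), k r ∂.volumeIoiPow (Module.finrank ℝ E - 1) :=
      integral_prod_mul (fun v : sphere (0 : E) 1 ↦ h v) fun r : Ioi (0 : ℝ) ↦ k r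
    _ = _ := by
      simp only [Measure.volumeIoiPow, ENNReal.ofReal]
      rw [integral_withDensity_eq_integral_smul
          (measurable_subtype_coe.pow_const _).real_toNNReal,
        integral_subtype_comap measurableSet_Ioi
          fun r ↦ Real.toNNReal (r ^ (Module.finrank ℝ E - 1)) • k r]
      congr 1
      refine setIntegral_congr_fun measurableSet_Ioi fun r hr ↦ ?_
      rw [NNReal.smul_def, Real.coe_toNNReal _ (pow_nonneg hr.out.le _), smul_eq_mul]

lemma integral_prod_fun_norm_addHaar {f : ℝ × ℝ → ℝ}
    (hE : Integrable (fun z : ℝ × E ↦ f (z.1, ‖z.2‖)) (volume.prod μ))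
    (hR : IntegrableOn (fun z : ℝ × ℝ ↦ z.2 ^ (Module.finrank ℝ E - 1) * f z)
      (univ ×ˢ Ioi (0 : ℝ))) :
    ∫ z : ℝ × E, f (z.1, ‖z.2‖) ∂volume.prod μ = μ.toSphere.real univ *
      ∫ z in univ ×ˢ Ioi (0 : ℝ), z.2 ^ (Module.finrank ℝ E - 1) * f z := by
  rw [integral_prod _ hE, Measure.volume_eq_prod, setIntegral_prod _ hR, setIntegral_univ,
    ← integral_const_mul]
  congr 1
  ext t
  rw [integral_fun_norm_addHaar μ fun r ↦ f (t, r), Measure.toSphere_real_apply_univ,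
    nsmul_eq_mul, smul_eq_mul, mul_assoc]
  rfl

lemma setIntegral_upperHalfPlane_eq_polar {F : Type*} [NormedAddCommGroup F] [NormedSpace ℝ F]
    (f : ℝ × ℝ → F) :
    ∫ z in univ ×ˢ Ioi (0 : ℝ), f z =
      ∫ p in Ioi (0 : ℝ) ×ˢ Ioo 0 π, p.1 • f (p.1 * cos p.2, p.1 * sin p.2) := by
  have hmeas : MeasurableSet (Ioi (0 : ℝ) ×ˢ Ioo 0 π) := measurableSet_Ioi.prod measurableSet_Ioo
  have hsub : Ioi (0 : ℝ) ×ˢ Ioo 0 π ⊆ polarCoord.target :=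
    prod_mono_right (Ioo_subset_Ioo_left (by linarith [pi_pos]))
  rw [← integral_indicator (MeasurableSet.univ.prod measurableSet_Ioi),
    ← integral_comp_polarCoord_symm, ← inter_eq_self_of_subset_right hsub,
    ← setIntegral_indicator hmeas]
  refine setIntegral_congr_fun polarCoord.open_target.measurableSet fun p ⟨hr, hθ⟩ ↦ ?_
  have hsin : 0 < p.1 * sin p.2 ↔ p.2 ∈ Ioo 0 π := by
    rw [mul_pos_iff_of_pos_left hr]
    refine ⟨fun h ↦ ⟨?_, hθ.2⟩, sin_pos_of_mem_Ioo⟩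
    by_contra! h0
    exact h.not_ge (sin_nonpos_of_nonpos_of_neg_pi_le h0 hθ.1.le)
  by_cases hp : p.2 ∈ Ioo 0 π
  · rw [indicator_of_mem (show p ∈ Ioi (0 : ℝ) ×ˢ Ioo 0 π from ⟨hr, hp⟩),
      indicator_of_mem (show polarCoord.symm p ∈ univ ×ˢ Ioi (0 : ℝ) from ⟨mem_univ _, hsin.2 hp⟩)]
    rfl
  · rw [indicator_of_notMem fun h ↦ hp (hsin.1 h.2), indicator_of_notMem fun h ↦ hp h.2, smul_zero]

end PolarCoordinates

section Gaussian

lemma integral_rpow_mul_exp_neg_sq {s : ℝ} (hs : -1 < s) :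
    ∫ r in Ioi (0 : ℝ), r ^ s * exp (-r ^ 2) = Gamma ((s + 1) / 2) / 2 := by
  have h := integral_rpow_mul_exp_neg_rpow two_pos hs
  simp only [rpow_two] at h
  rw [h, one_div_mul_eq_div]

lemma integral_pow_mul_exp_neg_sq (n : ℕ) :
    ∫ r in Ioi (0 : ℝ), r ^ n * exp (-r ^ 2) = Gamma ((n + 1) / 2) / 2 := by
  simpa only [rpow_natCast] using
    integral_rpow_mul_exp_neg_sq (show (-1 : ℝ) < n by linarith [n.cast_nonneg (α := ℝ)])

/-- The Gaussian extension `e^{-‖x‖²} g(x₀/‖x‖)` of the zonal function `v ↦ g(v₀)` on the sphere,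
written in terms of `x₀` and of the norm of the other coordinates. -/
noncomputable def gaussianZonal (g : ℝ → ℝ) (z : ℝ × ℝ) : ℝ :=
  g (z.1 / √(z.1 ^ 2 + z.2 ^ 2)) * exp (-(z.1 ^ 2 + z.2 ^ 2))

lemma gaussianZonal_polar (g : ℝ → ℝ) {r : ℝ} (hr : 0 < r) (θ : ℝ) :
    gaussianZonal g (r * cos θ, r * sin θ) = g (cos θ) * exp (-r ^ 2) := by
  have hsq : (r * cos θ) ^ 2 + (r * sin θ) ^ 2 = r ^ 2 := by
    linear_combination r ^ 2 * sin_sq_add_cos_sq θ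
  simp only [gaussianZonal, hsq, sqrt_sq hr.le, mul_div_cancel_left₀ _ hr.ne']

lemma setIntegral_upperHalfPlane_rpow_mul_gaussianZonal (g : ℝ → ℝ) {a : ℝ} (ha : -2 < a) :
    ∫ z in univ ×ˢ Ioi (0 : ℝ), z.2 ^ a * gaussianZonal g z =
      (∫ θ in 0..π, g (cos θ) * sin θ ^ a) * (Gamma (a / 2 + 1) / 2) := by
  have hpolar : ∀ p ∈ Ioi (0 : ℝ) ×ˢ Ioo 0 π,
      p.1 • ((p.1 * sin p.2) ^ a * gaussianZonal g (p.1 * cos p.2, p.1 * sin p.2)) =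
      (p.1 ^ (a + 1) * exp (-p.1 ^ 2)) * (g (cos p.2) * sin p.2 ^ a) := by
    rintro ⟨r, θ⟩ ⟨hr : 0 < r, hθ⟩
    simp only [gaussianZonal_polar g hr, smul_eq_mul, mul_rpow hr.le (sin_pos_of_mem_Ioo hθ).le,
      rpow_add_one hr.ne']
    ring
  rw [setIntegral_upperHalfPlane_eq_polar,
    setIntegral_congr_fun (measurableSet_Ioi.prod measurableSet_Ioo) hpolar, Measure.volume_eq_prod,
    setIntegral_prod_mul (fun r : ℝ ↦ r ^ (a + 1) * exp (-r ^ 2)) fun θ ↦ g (cos θ) * sin θ ^ a,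
    integral_rpow_mul_exp_neg_sq (by linarith), intervalIntegral.integral_of_le pi_pos.le,
    integral_Ioc_eq_integral_Ioo, mul_comm, show (a + 1 + 1) / 2 = a / 2 + 1 by ring]

lemma integral_sin_rpow {a : ℝ} (ha : -1 < a) :
    ∫ θ in 0..π, sin θ ^ a = √π * Gamma ((a + 1) / 2) / Gamma (a / 2 + 1) := by
  have h := setIntegral_upperHalfPlane_rpow_mul_gaussianZonal (fun _ ↦ 1)
    (show -2 < a by linarith)
  have hprod : ∀ z : ℝ × ℝ, z.2 ^ a * gaussianZonal (fun _ ↦ 1) z =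
      exp (-1 * z.1 ^ 2) * (z.2 ^ a * exp (-z.2 ^ 2)) := fun z ↦ by
    rw [gaussianZonal, neg_add, exp_add, neg_one_mul]
    ring
  simp only [one_mul, hprod] at h
  rw [Measure.volume_eq_prod, setIntegral_prod_mul (fun t : ℝ ↦ exp (-1 * t ^ 2))
    fun r ↦ r ^ a * exp (-r ^ 2), setIntegral_univ, integral_gaussian, div_one,
    integral_rpow_mul_exp_neg_sq ha] at h
  have hΓ : 0 < Gamma (a / 2 + 1) := Gamma_pos_of_pos (by linarith)
  rw [eq_div_iff hΓ.ne']
  linear_combination -2 * h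

lemma exists_bound_comp_div_sqrt {g : ℝ → ℝ} (hg : Continuous g) :
    ∃ C, ∀ t r : ℝ, ‖g (t / √(t ^ 2 + r ^ 2))‖ ≤ C := by
  obtain ⟨C, hC⟩ := isCompact_Icc.exists_bound_of_continuousOn (s := Icc (-1) 1) hg.continuousOn
  refine ⟨C, fun t r ↦ hC _ <| abs_le.1 ?_⟩
  rw [abs_div, abs_of_nonneg (sqrt_nonneg _)]
  exact div_le_one_of_le₀ (abs_le_sqrt (le_add_of_nonneg_right (sq_nonneg r))) (sqrt_nonneg _)

lemma integrable_gaussianZonal_comp {α : Type*} [MeasurableSpace α] {ν : Measure α} [SFinite ν]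
    {g : ℝ → ℝ} (hg : Continuous g) {w ρ : α → ℝ} (hρ : Measurable ρ)
    (hintegrable : Integrable (fun y ↦ w y * exp (-ρ y ^ 2)) ν) :
    Integrable (fun z : ℝ × α ↦ w z.2 * gaussianZonal g (z.1, ρ z.2)) (volume.prod ν) := by
  obtain ⟨C, hC⟩ := exists_bound_comp_div_sqrt hg
  have hgauss := (by simpa using integrable_exp_neg_mul_sq one_pos :
    Integrable fun t : ℝ ↦ exp (-t ^ 2)).mul_prod hintegrable
  have hmeas : Measurable fun z : ℝ × α ↦ g (z.1 / √(z.1 ^ 2 + ρ z.2 ^ 2)) :=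
    hg.measurable.comp (by fun_prop)
  refine (hgauss.bdd_mul hmeas.aestronglyMeasurable
    (.of_forall fun z ↦ hC z.1 (ρ z.2))).congr (.of_forall fun z ↦ ?_)
  simp only [gaussianZonal, neg_add, exp_add]
  ring

end Gaussian

section Slicing

variable {n : ℕ}

/-- The isometric splitting `ℝⁿ⁺¹ ≃ ℝ × ℝⁿ` into the `i`-th coordinate and the others, used to slice
spheres; only its measurable structure is recorded. -/
def splitCoord (i : Fin (n + 1)) :
    EuclideanSpace ℝ (Fin (n + 1)) ≃ᵐ ℝ × EuclideanSpace ℝ (Fin n) :=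
  (MeasurableEquiv.toLp 2 _).symm.trans <| (MeasurableEquiv.piFinSuccAbove (fun _ ↦ ℝ) i).trans <|
    (MeasurableEquiv.refl ℝ).prodCongr (MeasurableEquiv.toLp 2 _)

lemma splitCoord_fst (i : Fin (n + 1)) (x : EuclideanSpace ℝ (Fin (n + 1))) :
    (splitCoord i x).1 = x i := rfl

lemma splitCoord_norm_sq (i : Fin (n + 1)) (x : EuclideanSpace ℝ (Fin (n + 1))) :
    (splitCoord i x).1 ^ 2 + ‖(splitCoord i x).2‖ ^ 2 = ‖x‖ ^ 2 := by
  simp only [EuclideanSpace.real_norm_sq_eq, Fin.sum_univ_succAbove _ i]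
  rfl

lemma measurePreserving_splitCoord (i : Fin (n + 1)) :
    MeasurePreserving (splitCoord i) :=
  (((MeasurePreserving.id volume).prod (PiLp.volume_preserving_toLp (Fin n))).comp
    (volume_preserving_piFinSuccAbove (fun _ ↦ ℝ) i)).comp (PiLp.volume_preserving_ofLp _)

lemma integral_gaussianZonal_eq_sphere (i : Fin (n + 1)) (g : ℝ → ℝ) :
    ∫ z : ℝ × EuclideanSpace ℝ (Fin n), gaussianZonal g (z.1, ‖z.2‖) =
      (∫ v : sphere (0 : EuclideanSpace ℝ (Fin (n + 1))) 1, g (v.1 i) ∂volume.toSphere) *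
        (Gamma ((n + 1) / 2) / 2) := by
  rw [← (measurePreserving_splitCoord i).integral_comp' fun z ↦ gaussianZonal g (z.1, ‖z.2‖)]
  have hcone : ∀ x : EuclideanSpace ℝ (Fin (n + 1)),
      gaussianZonal g ((splitCoord i x).1, ‖(splitCoord i x).2‖) =
        g ((‖x‖⁻¹ • x) i) * exp (-‖x‖ ^ 2) := fun x ↦ by
    rw [gaussianZonal, splitCoord_norm_sq, sqrt_sq (norm_nonneg _), splitCoord_fst,
      PiLp.smul_apply, smul_eq_mul, inv_mul_eq_div]
  have hpolar := integral_mul_fun_norm_addHaar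
    (volume : Measure (EuclideanSpace ℝ (Fin (n + 1)))) (fun x ↦ g (x i)) fun r ↦ exp (-r ^ 2)
  rw [finrank_euclideanSpace_fin, Nat.add_sub_cancel_right, integral_pow_mul_exp_neg_sq] at hpolar
  simpa only [hcone] using hpolar

lemma integral_gaussianZonal_eq_angle {g : ℝ → ℝ} (hg : Continuous g) :
    ∫ z : ℝ × EuclideanSpace ℝ (Fin (n + 1)), gaussianZonal g (z.1, ‖z.2‖) =
      (volume : Measure (EuclideanSpace ℝ (Fin (n + 1)))).toSphere.real univ *
        (∫ θ in 0..π, g (cos θ) * sin θ ^ n) * (Gamma (n / 2 + 1) / 2) := by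
  have hn : (-1 : ℝ) < n := by linarith [n.cast_nonneg (α := ℝ)]
  have hpow : IntegrableOn (fun r : ℝ ↦ r ^ n * exp (-r ^ 2)) (Ioi 0) := by
    simpa using integrableOn_rpow_mul_exp_neg_mul_sq one_pos hn
  have hgauss : Integrable fun y : EuclideanSpace ℝ (Fin (n + 1)) ↦ 1 * exp (-‖y‖ ^ 2) := by
    simpa using (integrable_fun_norm_addHaar volume (f := fun r ↦ exp (-r ^ 2))).2 (by simpa)
  have hball := integrable_gaussianZonal_comp hg measurable_norm hgauss
  have hplane : IntegrableOn (fun z : ℝ × ℝ ↦ z.2 ^ n * gaussianZonal g z)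
      (univ ×ˢ Ioi (0 : ℝ)) := by
    have := integrable_gaussianZonal_comp (ν := volume.restrict (Ioi 0)) (w := fun r : ℝ ↦ r ^ n)
      (ρ := fun r ↦ r) hg measurable_id' hpow
    rwa [IntegrableOn, Measure.volume_eq_prod, ← Measure.prod_restrict, Measure.restrict_univ]
  have hslice := integral_prod_fun_norm_addHaar
    (volume : Measure (EuclideanSpace ℝ (Fin (n + 1)))) (f := gaussianZonal g)
    (by simpa using hball) (by simpa using hplane)
  have hangle := setIntegral_upperHalfPlane_rpow_mul_gaussianZonal g
    (show (-2 : ℝ) < n by linarith)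
  simp only [rpow_natCast] at hangle
  rwa [finrank_euclideanSpace_fin, Nat.add_sub_cancel_right, hangle, ← mul_assoc] at hslice

lemma integral_sphere_comp_coord (i : Fin (n + 2)) {g : ℝ → ℝ} (hg : Continuous g) :
    ∫ v : sphere (0 : EuclideanSpace ℝ (Fin (n + 2))) 1, g (v.1 i) ∂volume.toSphere =
      (volume : Measure (EuclideanSpace ℝ (Fin (n + 1)))).toSphere.real univ *
        ∫ θ in 0..π, g (cos θ) * sin θ ^ n := by
  have hΓ : Gamma ((n : ℝ) / 2 + 1) / 2 ≠ 0 :=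
    (half_pos (Gamma_pos_of_pos (by positivity))).ne'
  have h := (integral_gaussianZonal_eq_sphere i g).symm.trans (integral_gaussianZonal_eq_angle hg)
  rw [Nat.cast_add_one, show ((n : ℝ) + 1 + 1) / 2 = n / 2 + 1 by ring] at h
  exact mul_right_cancel₀ hΓ h

end Slicing

section Gegenbauer

open Polynomial

/-- The coefficient of `x^(n - 2k)` in the normalized Gegenbauer polynomial `C̃_n^l`. -/
noncomputable def gegenbauerCoeff (n : ℕ) (l : ℝ) (k : ℕ) : ℝ :=
  (-1) ^ k * Gamma (l + n - k) / (k.factorial * (n - 2 * k).factorial) * 2 ^ (n - 2 * k)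

/-- The normalized Gegenbauer polynomial `C̃_n^l` as a formal polynomial, so that it can be
differentiated algebraically; `gegenbauerCt n l` is its evaluation. -/
noncomputable def gegenbauerPoly (n : ℕ) (l : ℝ) : ℝ[X] :=
  ∑ k ∈ Finset.range (n / 2 + 1), monomial (n - 2 * k) (gegenbauerCoeff n l k)

lemma eval_gegenbauerPoly (n : ℕ) (l x : ℝ) : (gegenbauerPoly n l).eval x = gegenbauerCt n l x := by
  simp only [gegenbauerPoly, gegenbauerCt, eval_finsetSum, eval_monomial, gegenbauerCoeff, mul_pow,
    mul_assoc]

lemma gegenbauerPoly_zero (l : ℝ) : gegenbauerPoly 0 l = C (Gamma l) := by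
  simp [gegenbauerPoly, gegenbauerCoeff]

lemma gegenbauerCoeff_succ_left {n k : ℕ} (hk : 2 * k ≤ n) (l : ℝ) :
    gegenbauerCoeff (n + 1) l k * (n + 1 - 2 * k : ℕ) = 2 * gegenbauerCoeff n (l + 1) k := by
  have hfac : ((n - 2 * k : ℕ) : ℝ) + 1 ≠ 0 := by positivity
  rw [gegenbauerCoeff, gegenbauerCoeff, show n + 1 - 2 * k = n - 2 * k + 1 by omega,
    Nat.factorial_succ, pow_succ]
  push_cast
  rw [show l + (n + 1) - (k : ℝ) = l + 1 + n - k by ring]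
  field_simp

lemma derivative_gegenbauerPoly_succ (n : ℕ) (l : ℝ) :
    derivative (gegenbauerPoly (n + 1) l) = C 2 * gegenbauerPoly n (l + 1) := by
  have hterm : ∀ k ∈ Finset.range (n / 2 + 1),
      derivative (monomial (n + 1 - 2 * k) (gegenbauerCoeff (n + 1) l k)) =
        C 2 * monomial (n - 2 * k) (gegenbauerCoeff n (l + 1) k) := fun k hk ↦ by
    have hkn : 2 * k ≤ n := by have := Finset.mem_range.1 hk; omega
    rw [derivative_monomial, gegenbauerCoeff_succ_left hkn, C_mul_monomial,
      show n + 1 - 2 * k - 1 = n - 2 * k by omega]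
  have hrange : Finset.range (n / 2 + 1) ⊆ Finset.range ((n + 1) / 2 + 1) :=
    Finset.range_mono (by omega)
  rw [gegenbauerPoly, gegenbauerPoly, derivative_sum, Finset.mul_sum, ← Finset.sum_congr rfl hterm]
  refine (Finset.sum_subset hrange fun k hk hk' ↦ ?_).symm
  rw [Finset.mem_range] at hk hk'
  rw [show n + 1 - 2 * k = 0 by omega, derivative_monomial, Nat.cast_zero, mul_zero,
    monomial_zero_right]

lemma gegenbauerCoeff_succ_right {n k : ℕ} (hk : 2 * k + 2 ≤ n) {l : ℝ} (hl : 0 ≤ l) :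
    ((n : ℝ) - 2 * k) * (n - 2 * k - 1) * gegenbauerCoeff n l k =
      -(4 * (k + 1 : ℕ) * (n - (k + 1 : ℕ) + l) * gegenbauerCoeff n l (k + 1)) := by
  obtain ⟨m, rfl⟩ := Nat.exists_eq_add_of_le hk
  rw [gegenbauerCoeff, gegenbauerCoeff, show 2 * k + 2 + m - 2 * k = m + 2 by omega,
    show 2 * k + 2 + m - 2 * (k + 1) = m by omega,
    show l + (2 * k + 2 + m : ℕ) - k = l + k + m + 1 + 1 by push_cast; ring,
    Gamma_add_one (by positivity),
    show l + (2 * k + 2 + m : ℕ) - (k + 1 : ℕ) = l + k + m + 1 by push_cast; ring,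
    Nat.factorial_succ, Nat.factorial_succ, Nat.factorial_succ]
  have hm₁ : (m : ℝ) + 1 ≠ 0 := by positivity
  have hm₂ : (m : ℝ) + 1 + 1 ≠ 0 := by positivity
  have hk₁ : (k : ℝ) + 1 ≠ 0 := by positivity
  push_cast
  field_simp
  ring

/-- The Gegenbauer differential operator `(1 - x²) d²/dx² - (2l + 1) x d/dx` on polynomials, of
which `C̃_n^l` is an eigenvector. -/
noncomputable def gegenbauerOp (l : ℝ) : ℝ[X] →ₗ[ℝ] ℝ[X] :=
  LinearMap.mulLeft ℝ (1 - X ^ 2) ∘ₗ derivative ∘ₗ derivative -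
    LinearMap.mulLeft ℝ (C (2 * l + 1) * X) ∘ₗ derivative

lemma gegenbauerOp_apply (l : ℝ) (f : ℝ[X]) :
    gegenbauerOp l f =
      (1 - X ^ 2) * derivative (derivative f) - C (2 * l + 1) * X * derivative f := rfl

lemma gegenbauerOp_monomial (l c : ℝ) (m : ℕ) :
    gegenbauerOp l (monomial m c) =
      monomial (m - 2) (m * (m - 1) * c) - monomial m (m * (m + 2 * l) * c) := by
  rw [gegenbauerOp_apply, derivative_monomial, derivative_monomial, sub_mul, one_mul,
    mul_assoc (C _), X_mul_monomial, X_pow_mul_monomial, C_mul_monomial]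
  rcases m with _ | _ | m
  · simp
  · simp [mul_comm, add_comm]
  · simp only [Nat.add_sub_cancel]
    rw [sub_sub, ← map_add]
    push_cast
    congr 2 <;> ring

lemma gegenbauerOp_gegenbauerPoly (n : ℕ) {l : ℝ} (hl : 0 ≤ l) :
    gegenbauerOp l (gegenbauerPoly n l) = -((n * (n + 2 * l)) • gegenbauerPoly n l) := by
  set c := gegenbauerCoeff n l
  set lower : ℕ → ℝ[X] := fun k ↦
    monomial (n - 2 * k - 2) (((n : ℝ) - 2 * k) * (n - 2 * k - 1) * c k)
  set diag : ℕ → ℝ[X] := fun k ↦ monomial (n - 2 * k) (4 * k * (n - k + l) * c k)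
  have hterm : ∀ k ∈ Finset.range (n / 2 + 1),
      gegenbauerOp l (monomial (n - 2 * k) (c k)) +
        (n * (n + 2 * l)) • monomial (n - 2 * k) (c k) = lower k + diag k := fun k hk ↦ by
    have hkn : 2 * k ≤ n := by have := Finset.mem_range.1 hk; omega
    rw [gegenbauerOp_monomial, smul_monomial, sub_add, ← map_sub, sub_eq_add_neg, ← map_neg,
      Nat.cast_sub hkn, smul_eq_mul]
    push_cast
    congr 2
    ring
  have hcancel : ∀ k ∈ Finset.range (n / 2), lower k = -diag (k + 1) := fun k hk ↦ by
    have hkn : 2 * k + 2 ≤ n := by have := Finset.mem_range.1 hk; omega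
    simp only [lower, diag, c]
    rw [gegenbauerCoeff_succ_right hkn hl, map_neg, show n - 2 * k - 2 = n - 2 * (k + 1) by omega]
  have hlast : lower (n / 2) = 0 := by
    obtain ⟨m, rfl | rfl⟩ := n.even_or_odd'
    · simp [lower]
    · simp [lower, show (2 * m + 1) / 2 = m by omega]
  have hfirst : diag 0 = 0 := by simp [diag]
  rw [eq_neg_iff_add_eq_zero, gegenbauerPoly, map_sum, Finset.smul_sum, ← Finset.sum_add_distrib,
    Finset.sum_congr rfl hterm, Finset.sum_add_distrib, Finset.sum_range_succ, hlast,
    Finset.sum_range_succ' diag, hfirst, Finset.sum_congr rfl hcancel, Finset.sum_neg_distrib,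
    add_zero, add_zero, neg_add_cancel]

lemma continuous_eval_cos_mul_sin_rpow (f : ℝ[X]) {a : ℝ} (ha : 0 ≤ a) :
    Continuous fun θ ↦ f.eval (cos θ) * sin θ ^ a :=
  (f.continuous.comp continuous_cos).mul (continuous_sin.rpow_const fun _ ↦ .inr ha)

lemma integral_derivative_eval_cos_mul_sin_rpow (f : ℝ[X]) {l : ℝ} (hl : 0 ≤ l) :
    ∫ θ in 0..π, ((1 - X ^ 2) * derivative f - C (2 * l + 1) * X * f).eval (cos θ) *
      sin θ ^ (2 * l) = 0 := by
  set g := (1 - X ^ 2) * derivative f - C (2 * l + 1) * X * f with hg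
  have hderiv : ∀ θ ∈ Ioo 0 π, HasDerivAt (fun θ ↦ f.eval (cos θ) * sin θ ^ (2 * l + 1))
      (-(g.eval (cos θ) * sin θ ^ (2 * l))) θ := fun θ hθ ↦ by
    have hsin : 0 < sin θ := sin_pos_of_mem_Ioo hθ
    refine (((f.hasDerivAt (cos θ)).comp θ (hasDerivAt_cos θ)).mul
      ((hasDerivAt_sin θ).rpow_const (p := 2 * l + 1) (.inl hsin.ne'))).congr_deriv ?_
    simp only [hg, eval_sub, eval_mul, eval_one, eval_pow, eval_X, eval_C, add_sub_cancel_right,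
      rpow_add_one hsin.ne', Function.comp_apply]
    linear_combination -(derivative f).eval (cos θ) * sin θ ^ (2 * l) * sin_sq_add_cos_sq θ
  have hftc := intervalIntegral.integral_eq_sub_of_hasDerivAt_of_le pi_pos.le
    (continuous_eval_cos_mul_sin_rpow f (by positivity)).continuousOn hderiv
    ((continuous_eval_cos_mul_sin_rpow g (by positivity)).neg.intervalIntegrable 0 π)
  rwa [intervalIntegral.integral_neg, sin_pi, sin_zero, zero_rpow (by positivity), mul_zero,
    mul_zero, sub_zero, neg_eq_zero] at hftc

lemma sin_rpow_two_mul_add_one {l θ : ℝ} (hl : 0 ≤ l) (hθ : 0 ≤ sin θ) :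
    sin θ ^ (2 * (l + 1)) = (1 - cos θ ^ 2) * sin θ ^ (2 * l) := by
  rw [mul_add_one, rpow_add_of_nonneg hθ (by positivity) zero_le_two, rpow_two, sin_sq, mul_comm]

lemma integral_derivative_sq_of_gegenbauerOp_eq {f : ℝ[X]} {l κ : ℝ} (hl : 0 ≤ l)
    (hf : gegenbauerOp l f = -(κ • f)) :
    ∫ θ in 0..π, (derivative f).eval (cos θ) ^ 2 * sin θ ^ (2 * (l + 1)) =
      κ * ∫ θ in 0..π, f.eval (cos θ) ^ 2 * sin θ ^ (2 * l) := by
  have hintegrable (g : ℝ[X]) {a : ℝ} (ha : 0 ≤ a) :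
      IntervalIntegrable (fun θ ↦ g.eval (cos θ) ^ 2 * sin θ ^ a) volume 0 π := by
    have h := (continuous_eval_cos_mul_sin_rpow (g ^ 2) ha).intervalIntegrable (μ := volume) 0 π
    simpa only [eval_pow] using h
  have hgreen : (1 - X ^ 2) * derivative (f * derivative f) -
      C (2 * l + 1) * X * (f * derivative f) = (1 - X ^ 2) * derivative f ^ 2 - C κ * f ^ 2 := by
    rw [gegenbauerOp_apply, smul_eq_C_mul] at hf
    rw [derivative_mul]
    linear_combination f * hf
  rw [← sub_eq_zero, ← intervalIntegral.integral_const_mul, ← intervalIntegral.integral_sub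
    (hintegrable _ (by positivity)) ((hintegrable _ (by positivity)).const_mul κ)]
  refine Eq.trans ?_ (integral_derivative_eval_cos_mul_sin_rpow (f * derivative f) hl)
  rw [hgreen]
  refine intervalIntegral.integral_congr fun θ hθ ↦ ?_
  rw [uIcc_of_le pi_pos.le] at hθ
  simp only [sin_rpow_two_mul_add_one hl (sin_nonneg_of_mem_Icc hθ), eval_mul, eval_sub, eval_one,
    eval_pow, eval_X, eval_C]
  ring

lemma integral_gegenbauerCt_zero_sq {l : ℝ} (hl : 0 < l) :
    ∫ θ in 0..π, gegenbauerCt 0 l (cos θ) ^ 2 * sin θ ^ (2 * l) =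
      π * 2 ^ (1 - 2 * l) * Gamma (2 * l) / l := by
  have hΓ : Gamma l ≠ 0 := (Gamma_pos_of_pos hl).ne'
  simp only [← eval_gegenbauerPoly, gegenbauerPoly_zero, eval_C]
  rw [intervalIntegral.integral_const_mul, integral_sin_rpow (by linarith), add_div,
    mul_div_cancel_left₀ _ two_ne_zero, Gamma_add_one hl.ne']
  calc
    _ = √π * (Gamma l * Gamma (l + 1 / 2)) / l := by field_simp
    _ = √π ^ 2 * 2 ^ (1 - 2 * l) * Gamma (2 * l) / l := by
      rw [Gamma_mul_Gamma_add_half]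
      ring
    _ = _ := by rw [sq_sqrt pi_pos.le]

lemma integral_gegenbauerCt_succ_sq (n : ℕ) {l : ℝ} (hl : 0 ≤ l) :
    4 * ∫ θ in 0..π, gegenbauerCt n (l + 1) (cos θ) ^ 2 * sin θ ^ (2 * (l + 1)) =
      (n + 1) * (n + 1 + 2 * l) *
        ∫ θ in 0..π, gegenbauerCt (n + 1) l (cos θ) ^ 2 * sin θ ^ (2 * l) := by
  have h := integral_derivative_sq_of_gegenbauerOp_eq hl (gegenbauerOp_gegenbauerPoly (n + 1) hl)
  simp only [derivative_gegenbauerPoly_succ, eval_mul, eval_C, eval_gegenbauerPoly, mul_pow,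
    mul_assoc ((2 : ℝ) ^ 2), intervalIntegral.integral_const_mul, Nat.cast_add_one] at h
  rw [← h]
  norm_num

theorem integral_gegenbauerCt_sq (n : ℕ) {l : ℝ} (hl : 0 ≤ l) (hnl : 0 < n + l) :
    ∫ θ in 0..π, gegenbauerCt n l (cos θ) ^ 2 * sin θ ^ (2 * l) =
      π * 2 ^ (1 - 2 * l) * Gamma (n + 2 * l) / (n.factorial * (n + l)) := by
  induction n generalizing l with
  | zero =>
    rw [Nat.cast_zero, zero_add] at hnl
    simpa using integral_gegenbauerCt_zero_sq hnl
  | succ n ih =>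
    have hstep := integral_gegenbauerCt_succ_sq n hl
    have hκ : ((n : ℝ) + 1) * (n + 1 + 2 * l) ≠ 0 := by positivity
    rw [ih (by positivity) (by positivity), show 1 - 2 * (l + 1) = 1 - 2 * l - 2 by ring,
      rpow_sub two_pos, rpow_two, show n + 2 * (l + 1) = n + 1 + 2 * l + 1 by ring,
      Gamma_add_one (by positivity), show (n : ℝ) + (l + 1) = n + 1 + l by ring] at hstep
    rw [← mul_right_inj' hκ, ← hstep, Nat.factorial_succ]
    push_cast
    have hnl' : (n : ℝ) + 1 + l ≠ 0 := by positivity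
    field_simp
    norm_num

end Gegenbauer

lemma integral_sphere_gegenbauerCt_sq {n : ℕ} (i : Fin (n + 2)) {m : ℕ} (hm : 0 < m + n) :
    ∫ v : sphere (0 : EuclideanSpace ℝ (Fin (n + 2))) 1, gegenbauerCt m (n / 2) (v.1 i) ^ 2
        ∂volume.toSphere =
      (volume : Measure (EuclideanSpace ℝ (Fin (n + 1)))).toSphere.real univ *
        (π * 2 ^ (1 - (n : ℝ)) * Gamma (m + n) / (m.factorial * (m + n / 2))) := by
  have hcont : Continuous fun x ↦ gegenbauerCt m (n / 2) x ^ 2 := by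
    simp only [← eval_gegenbauerPoly]
    fun_prop
  have hmn : (0 : ℝ) < m + n / 2 := by
    rcases m.eq_zero_or_pos with rfl | h
    · have : 0 < n := by omega
      positivity
    · positivity
  rw [integral_sphere_comp_coord i hcont]
  have h := integral_gegenbauerCt_sq m (by positivity) hmn
  simp only [mul_div_cancel₀ (n : ℝ) two_ne_zero, rpow_natCast] at h
  rw [h]

theorem psi_L2_norm_general {p q : ℕ} (hp : 2 ≤ p) (hq : 2 ≤ q) (a : Fin p) (b : Fin q) {j k : ℕ}
    (hjk : 2 * k + q = 2 * j + p) (hpos : 2 < p + 2 * j) :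
    ∫ v : sphere (0 : EuclideanSpace ℝ (Fin p)) 1, ∫ w : sphere (0 : EuclideanSpace ℝ (Fin q)) 1,
        |gegenbauerCt j (((p : ℝ) - 2) / 2) (v.1 a) *
          gegenbauerCt k (((q : ℝ) - 2) / 2) (w.1 b)| ^ 2
        ∂volume.toSphere ∂volume.toSphere =
      π ^ 2 * Gamma (j + ((p : ℝ) - 3) + 1) *
          Gamma (j + (((p : ℝ) - 3) + ((q : ℝ) - 3) + 2) / 2) /
        (j.factorial * (2 : ℝ) ^ (((p : ℝ) - 3) + ((q : ℝ) - 3)) *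
          (j + (((p : ℝ) - 3) + 1) / 2) ^ 2 *
          Gamma (j + (((p : ℝ) - 3) - ((q : ℝ) - 3) + 2) / 2)) *
        ((volume : Measure (EuclideanSpace ℝ (Fin (p - 1)))).toSphere univ).toReal *
        ((volume : Measure (EuclideanSpace ℝ (Fin (q - 1)))).toSphere univ).toReal := by
  obtain ⟨m, rfl⟩ := Nat.exists_eq_add_of_le' hp
  obtain ⟨n, rfl⟩ := Nat.exists_eq_add_of_le' hq
  have hm₂ : ((m + 2 : ℕ) : ℝ) - 2 = m := by push_cast; ring
  have hm₃ : ((m + 2 : ℕ) : ℝ) - 3 = m - 1 := by push_cast; ring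
  have hn₂ : ((n + 2 : ℕ) : ℝ) - 2 = n := by push_cast; ring
  have hn₃ : ((n + 2 : ℕ) : ℝ) - 3 = n - 1 := by push_cast; ring
  have hk : (k : ℝ) = j + (m - n) / 2 := by
    have : 2 * (k : ℝ) + (n + 2) = 2 * j + (m + 2) := by exact_mod_cast hjk
    linarith
  have hfac : Gamma (j + ((m - 1 : ℝ) - (n - 1) + 2) / 2) = k.factorial := by
    rw [← Gamma_nat_eq_factorial, hk]
    ring_nf
  have hpow : (2 : ℝ) ^ ((m - 1 : ℝ) + (n - 1)) = (2 ^ (1 - m : ℝ) * 2 ^ (1 - n : ℝ))⁻¹ := by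
    rw [← rpow_add two_pos, ← rpow_neg two_pos.le]
    ring_nf
  simp only [hm₂, hm₃, hn₂, hn₃, sq_abs, mul_pow, integral_const_mul, integral_mul_const]
  rw [integral_sphere_gegenbauerCt_sq a (by omega), integral_sphere_gegenbauerCt_sq b (by omega),
    hfac, hpow, show (k : ℝ) + n = j + ((m - 1 : ℝ) + (n - 1) + 2) / 2 by rw [hk]; ring,
    show (k : ℝ) + n / 2 = j + m / 2 by rw [hk]; ring, add_assoc (j : ℝ), sub_add_cancel]
  simp only [measureReal_def, Nat.add_one_sub_one]
  field_simp

/-- **`L²`-norm of the `K'`-fixed vectors `ψ_j` on `S^{p−1} × S^{q−1}`.**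
Here the spheres carry their surface measure `volume.toSphere`, and
`vol(S^{n−1}) = (volume.toSphere) univ` is the surface volume of the unit sphere in `ℝⁿ`. -/
theorem psi_L2_norm (p q : ℕ) (hq : 2 ≤ q) (hpq : q ≤ p) (heven : Even (p + q))
    (hsum : 6 ≤ p + q) (j : ℕ) :
    ∫ v : Metric.sphere (0 : EuclideanSpace ℝ (Fin p)) 1,
      ∫ w : Metric.sphere (0 : EuclideanSpace ℝ (Fin q)) 1,
        |gegenbauerCt j (((p : ℝ) - 2) / 2) ((v : EuclideanSpace ℝ (Fin p)) ⟨0, by omega⟩)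
          * gegenbauerCt (j + (p - q) / 2) (((q : ℝ) - 2) / 2)
              ((w : EuclideanSpace ℝ (Fin q)) ⟨q - 1, by omega⟩)| ^ 2
        ∂(volume : Measure (EuclideanSpace ℝ (Fin q))).toSphere
      ∂(volume : Measure (EuclideanSpace ℝ (Fin p))).toSphere
    = Real.pi ^ 2 * Real.Gamma (j + ((p : ℝ) - 3) + 1)
        * Real.Gamma (j + (((p : ℝ) - 3) + ((q : ℝ) - 3) + 2) / 2)
        / (j.factorial * (2 : ℝ) ^ (((p : ℝ) - 3) + ((q : ℝ) - 3))
            * (j + (((p : ℝ) - 3) + 1) / 2) ^ 2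
            * Real.Gamma (j + (((p : ℝ) - 3) - ((q : ℝ) - 3) + 2) / 2))
        * ((volume : Measure (EuclideanSpace ℝ (Fin (p - 1)))).toSphere Set.univ).toReal
        * ((volume : Measure (EuclideanSpace ℝ (Fin (q - 1)))).toSphere Set.univ).toReal := by
  obtain ⟨r, hr⟩ := heven
  exact psi_L2_norm_general (by omega) hq ⟨0, by omega⟩ ⟨q - 1, by omega⟩ (by omega) (by omega)
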